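/- Let p be a prime. There is an injective GL₂(𝔽_p)-equivariant linear map ι : V_{p−1} → V_{2p−2}/V*_{2p−2} with ι(X^{p−1}) equal to the class of X^{2p−2}, and the quotient (V_{2p−2}/V*_{2p−2})/ι(V_{p−1}) is isomorphic as a GL₂(𝔽_p)-representation to the trivial representation V_0; in other words there is a short exact sequence of GL₂(𝔽_p)-representations 0 → V_{p−1} → V_{2p−2}/V*_{2p−2} → V_0 → 0. -/

import Mathlib

/-!
Common setup: the symmetric power representations `V_r` of `GL₂(𝔽_p)` realized as
homogeneous polynomials of degree `r` in `𝔽_p[X,Y]` with the action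
`([[a,b],[c,d]]·P)(X,Y) = P(aX+cY, bX+dY)`, the subrepresentation `V_r*` of polynomials
divisible by `X^p Y − X Y^p`, and the quotient representation `V_{2p−2}/V*_{2p−2}`.
-/

set_option synthInstance.maxHeartbeats 1000000
set_option maxHeartbeats 1000000

open MvPolynomial

variable (p : ℕ) [Fact p.Prime]

/-- The action of a 2×2 matrix `M = [[a,b],[c,d]]` on polynomials:
`(M·P)(X,Y) = P(aX+cY, bX+dY)`; the variable `X i` is sent to `Σ_j M j i • X j`. -/
noncomputable def polyAct (M : Matrix (Fin 2) (Fin 2) (ZMod p)) :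
    MvPolynomial (Fin 2) (ZMod p) →ₗ[ZMod p] MvPolynomial (Fin 2) (ZMod p) :=
  (aeval fun i => ∑ j, C (M j i) * X j).toLinearMap

/-- `V_r`: homogeneous polynomials of degree r in 𝔽_p[X,Y]. -/
noncomputable def Vpoly (r : ℕ) : Submodule (ZMod p) (MvPolynomial (Fin 2) (ZMod p)) :=
  homogeneousSubmodule (Fin 2) (ZMod p) r

lemma polyAct_mem (M : Matrix (Fin 2) (Fin 2) (ZMod p)) {r : ℕ}
    {P : MvPolynomial (Fin 2) (ZMod p)} (hP : P ∈ Vpoly p r) :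
    polyAct p M P ∈ Vpoly p r := by
  rw [Vpoly, mem_homogeneousSubmodule] at hP ⊢
  have h := hP.aeval (g := fun i => ∑ j, C (M j i) * X j) (n := 1) ?_
  · rw [one_mul] at h; exact h
  · intro i
    apply MvPolynomial.IsHomogeneous.sum
    intro j _
    simpa using (isHomogeneous_C (Fin 2) (M j i)).mul (isHomogeneous_X (ZMod p) j)

/-- `V_r*`: elements of `V_r` divisible by `X^p Y − X Y^p`. -/
noncomputable def VpolyStar (r : ℕ) : Submodule (ZMod p) (MvPolynomial (Fin 2) (ZMod p)) :=
  Vpoly p r ⊓ Submodule.restrictScalars (ZMod p)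
    (Ideal.span {(X 0 : MvPolynomial (Fin 2) (ZMod p)) ^ p * X 1 - X 0 * X 1 ^ p})

lemma frob (a c : ZMod p) : (C a * X 0 + C c * X 1 : MvPolynomial (Fin 2) (ZMod p)) ^ p
    = C a * X 0 ^ p + C c * X 1 ^ p := by
  have : (C a * X 0 + C c * X 1 : MvPolynomial (Fin 2) (ZMod p)) ^ p
      = (C a * X 0) ^ p + (C c * X 1) ^ p := add_pow_char _ _ _
  rw [this, mul_pow, mul_pow, ← C_pow, ← C_pow, ZMod.pow_card, ZMod.pow_card]

lemma polyAct_det (M : Matrix (Fin 2) (Fin 2) (ZMod p)) :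
    polyAct p M ((X 0 : MvPolynomial (Fin 2) (ZMod p)) ^ p * X 1 - X 0 * X 1 ^ p)
      = C (M 0 0 * M 1 1 - M 1 0 * M 0 1) *
        ((X 0 : MvPolynomial (Fin 2) (ZMod p)) ^ p * X 1 - X 0 * X 1 ^ p) := by
  have h0 : polyAct p M (X 0) = C (M 0 0) * X 0 + C (M 1 0) * X 1 := by
    simp [polyAct, Fin.sum_univ_two]
  have h1 : polyAct p M (X 1) = C (M 0 1) * X 0 + C (M 1 1) * X 1 := by
    simp [polyAct, Fin.sum_univ_two]
  have hact : ∀ Q R : MvPolynomial (Fin 2) (ZMod p),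
      polyAct p M (Q * R) = polyAct p M Q * polyAct p M R := fun Q R => by
    simp [polyAct]
  have hsub : ∀ Q R : MvPolynomial (Fin 2) (ZMod p),
      polyAct p M (Q - R) = polyAct p M Q - polyAct p M R := fun Q R => by
    simp [polyAct]
  have hpow : ∀ (Q : MvPolynomial (Fin 2) (ZMod p)) (n : ℕ),
      polyAct p M (Q ^ n) = polyAct p M Q ^ n := fun Q n => by
    simp [polyAct]
  rw [hsub, hact, hact, hpow, hpow, h0, h1, frob, frob]
  simp only [map_sub, map_mul]
  ring

lemma polyAct_star_mem (M : Matrix (Fin 2) (Fin 2) (ZMod p)) {r : ℕ}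
    {P : MvPolynomial (Fin 2) (ZMod p)} (hP : P ∈ VpolyStar p r) :
    polyAct p M P ∈ VpolyStar p r := by
  rw [VpolyStar, Submodule.mem_inf] at hP ⊢
  obtain ⟨h1, h2⟩ := hP
  refine ⟨polyAct_mem p M h1, ?_⟩
  rw [Submodule.restrictScalars_mem, Ideal.mem_span_singleton] at h2 ⊢
  obtain ⟨Q, hQ⟩ := h2
  refine ⟨C (M 0 0 * M 1 1 - M 1 0 * M 0 1) * polyAct p M Q, ?_⟩
  have hact : ∀ Q R : MvPolynomial (Fin 2) (ZMod p),
      polyAct p M (Q * R) = polyAct p M Q * polyAct p M R := fun Q R => by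
    simp [polyAct]
  rw [hQ, hact, polyAct_det]
  ring

/-- The action of M on `V_r` (the restriction of `polyAct`). -/
noncomputable def actV (r : ℕ) (M : Matrix (Fin 2) (Fin 2) (ZMod p)) :
    Vpoly p r →ₗ[ZMod p] Vpoly p r :=
  (polyAct p M).restrict (fun _ hx => polyAct_mem p M hx)

/-- `V*_{2p−2}` as a submodule of `V_{2p−2}`. -/
noncomputable def VStarIn : Submodule (ZMod p) (Vpoly p (2 * p - 2)) :=
  (VpolyStar p (2 * p - 2)).comap (Vpoly p (2 * p - 2)).subtype

/-- The quotient representation `V_{2p−2}/V*_{2p−2}`. -/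
abbrev Qspace := Vpoly p (2 * p - 2) ⧸ VStarIn p

/-- The action of M on the quotient `V_{2p−2}/V*_{2p−2}`. -/
noncomputable def qAct (M : Matrix (Fin 2) (Fin 2) (ZMod p)) :
    Qspace p →ₗ[ZMod p] Qspace p :=
  Submodule.mapQ (VStarIn p) (VStarIn p) (actV p (2 * p - 2) M)
    (fun x hx => by
      simp only [VStarIn, Submodule.mem_comap] at hx ⊢
      exact polyAct_star_mem p M hx)

lemma memX0 (n : ℕ) : (X 0 : MvPolynomial (Fin 2) (ZMod p)) ^ n ∈ Vpoly p n := by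
  rw [Vpoly, mem_homogeneousSubmodule]
  simpa using (isHomogeneous_X (ZMod p) (0 : Fin 2)).pow n

lemma memc : ((X 0 : MvPolynomial (Fin 2) (ZMod p)) ^ (2 * p - 2)
    - X 0 ^ (p - 1) * X 1 ^ (p - 1) + X 1 ^ (2 * p - 2)) ∈ Vpoly p (2 * p - 2) := by
  have h2 : (2 : ℕ) ≤ p := (Fact.out : p.Prime).two_le
  rw [Vpoly, mem_homogeneousSubmodule]
  have hX0 : ((X 0 : MvPolynomial (Fin 2) (ZMod p)) ^ (2 * p - 2)).IsHomogeneous (2 * p - 2) := by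
    simpa using (isHomogeneous_X (ZMod p) (0 : Fin 2)).pow (2 * p - 2)
  have hX1 : ((X 1 : MvPolynomial (Fin 2) (ZMod p)) ^ (2 * p - 2)).IsHomogeneous (2 * p - 2) := by
    simpa using (isHomogeneous_X (ZMod p) (1 : Fin 2)).pow (2 * p - 2)
  have hmid : ((X 0 : MvPolynomial (Fin 2) (ZMod p)) ^ (p - 1)
      * X 1 ^ (p - 1)).IsHomogeneous (2 * p - 2) := by
    have h := (((isHomogeneous_X (ZMod p) (0 : Fin 2)).pow (p - 1)).mul
      ((isHomogeneous_X (ZMod p) (1 : Fin 2)).pow (p - 1)))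
    have he : 1 * (p - 1) + 1 * (p - 1) = 2 * p - 2 := by omega
    rwa [he] at h
  exact (hX0.sub hmid).add hX1

/-- The class of `X^{2p−2}` in `V_{2p−2}/V*_{2p−2}`. -/
noncomputable def xElt : Qspace p :=
  Submodule.Quotient.mk ⟨(X 0 : MvPolynomial (Fin 2) (ZMod p)) ^ (2 * p - 2), memX0 p (2 * p - 2)⟩

/-- The class of `X^{2p−2} − X^{p−1}Y^{p−1} + Y^{2p−2}` in `V_{2p−2}/V*_{2p−2}`. -/
noncomputable def cElt : Qspace p :=
  Submodule.Quotient.mk ⟨(X 0 : MvPolynomial (Fin 2) (ZMod p)) ^ (2 * p - 2)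
    - X 0 ^ (p - 1) * X 1 ^ (p - 1) + X 1 ^ (2 * p - 2), memc p⟩

/-!
A homogeneous polynomial over `𝔽_q` is divisible by `X^q Y − X Y^q` exactly when it vanishes at
every point of `𝔽_q²`, so `V_r / V_r*` is the space of functions on `𝔽_q²` given by the forms of
degree `r`. Since `x ^ (n + q - 1) = x ^ n` on `𝔽_q` for `n ≠ 0`, the monomials of degree `2q - 2`
give the same functions as the monomials of degree `q - 1`, together with one new function
`x ^ (q - 1) * y ^ (q - 1)`. Forms of degree `q - 1` have sum zero over `𝔽_q²`, the new function
has sum `1`, and the sum over all points is invariant under `GL₂(𝔽_q)`; hence it is the projection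
onto the trivial representation.
-/

section LinearSubstitution

variable {σ R : Type*} [Fintype σ] [CommSemiring R]

/-- The linear substitution `P ↦ P ∘ (v ↦ v ᵥ* M)` of variables, by which matrices act on
polynomials. -/
noncomputable def linSubst (M : Matrix σ σ R) : MvPolynomial σ R →ₐ[R] MvPolynomial σ R :=
  aeval fun i => ∑ j, C (M j i) * X j

lemma eval_linSubst (M : Matrix σ σ R) (P : MvPolynomial σ R) (v : σ → R) :
    eval v (linSubst M P) = eval (Matrix.vecMul v M) P := by
  rw [linSubst, ← coe_aeval_eq_eval, ← coe_aeval_eq_eval, RingHom.coe_coe, RingHom.coe_coe,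
    ← AlgHom.comp_apply, comp_aeval]
  congr 2
  ext i
  simp [Matrix.vecMul, dotProduct, mul_comm]

lemma isHomogeneous_linSubst (M : Matrix σ σ R) {r : ℕ} {P : MvPolynomial σ R}
    (hP : P.IsHomogeneous r) : (linSubst M P).IsHomogeneous r := by
  simpa only [linSubst, one_mul] using hP.aeval (n := 1) _ fun i =>
    IsHomogeneous.sum _ _ _ fun j _ => isHomogeneous_C_mul_X (M j i) j

/-- The action of a matrix on the homogeneous polynomials of degree `r` by linear substitution. -/
noncomputable def homogeneousAct (r : ℕ) (M : Matrix σ σ R) :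
    homogeneousSubmodule σ R r →ₗ[R] homogeneousSubmodule σ R r :=
  (linSubst M).toLinearMap.restrict fun _ hP => isHomogeneous_linSubst M hP

variable (σ R) in
/-- Homogeneous polynomials of degree `r` as functions on the points of affine space. -/
noncomputable def homogeneousEval (r : ℕ) : homogeneousSubmodule σ R r →ₗ[R] (σ → R) → R :=
  (evalₗ R σ).domRestrict _

lemma homogeneousEval_homogeneousAct {r : ℕ} (M : Matrix σ σ R) (P : homogeneousSubmodule σ R r) :
    homogeneousEval σ R r (homogeneousAct r M P) =
      fun v => homogeneousEval σ R r P (Matrix.vecMul v M) :=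
  funext (eval_linSubst M P.1)

end LinearSubstitution

section Monomials

variable (R : Type*) [CommSemiring R]

/-- The function `(x, y) ↦ x ^ i * y ^ j`. -/
def monomialFun (i j : ℕ) : (Fin 2 → R) → R :=
  fun v => v 0 ^ i * v 1 ^ j

lemma isHomogeneous_X_pow_mul_X_pow (i j : ℕ) :
    (X 0 ^ i * X 1 ^ j : MvPolynomial (Fin 2) R).IsHomogeneous (i + j) :=
  (isHomogeneous_X_pow 0 i).mul (isHomogeneous_X_pow 1 j)

lemma homogeneousSubmodule_fin_two_eq_span (r : ℕ) :
    homogeneousSubmodule (Fin 2) R r =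
      Submodule.span R ((fun d => X 0 ^ d.1 * X 1 ^ d.2) '' {d : ℕ × ℕ | d.1 + d.2 = r}) := by
  apply le_antisymm
  · intro P hP
    rw [← Polynomial.homogenize_eq_of_isHomogeneous hP rfl, Polynomial.homogenize]
    refine Submodule.sum_mem _ fun d hd => ?_
    rw [monomial_eq, ← smul_eq_C_mul]
    refine Submodule.smul_mem _ _ (Submodule.subset_span ⟨d, ?_, ?_⟩)
    · exact Finset.HasAntidiagonal.mem_antidiagonal.mp hd
    · simp [Finsupp.prod_fintype, Fin.prod_univ_two]
  · rw [Submodule.span_le]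
    rintro _ ⟨d, rfl, rfl⟩
    exact isHomogeneous_X_pow_mul_X_pow R d.1 d.2

lemma range_homogeneousEval (r : ℕ) :
    LinearMap.range (homogeneousEval (Fin 2) R r) =
      Submodule.span R ((fun d => monomialFun R d.1 d.2) '' {d : ℕ × ℕ | d.1 + d.2 = r}) := by
  rw [homogeneousEval, LinearMap.range_domRestrict, homogeneousSubmodule_fin_two_eq_span,
    Submodule.map_span, Set.image_image]
  congr! 2 with d
  ext v
  simp [monomialFun]

variable {R}

lemma homogeneousEval_X_pow (r : ℕ) :
    homogeneousEval (Fin 2) R r ⟨X 0 ^ r, isHomogeneous_X_pow 0 r⟩ = monomialFun R r 0 := by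
  ext v
  simp [homogeneousEval, monomialFun]

lemma monomialFun_mem_range {i j r : ℕ} (h : i + j = r) :
    monomialFun R i j ∈ LinearMap.range (homogeneousEval (Fin 2) R r) := by
  rw [range_homogeneousEval]
  exact Submodule.subset_span ⟨(i, j), h, rfl⟩

end Monomials

section DicksonForm

variable {R : Type*} [CommRing R]

variable (R) in
/-- The Dickson form `X ^ q * Y - X * Y ^ q`, which vanishes at all points of `𝔽_q²`. -/
noncomputable def dicksonForm (q : ℕ) : MvPolynomial (Fin 2) R :=
  X 0 ^ q * X 1 - X 0 * X 1 ^ q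

lemma homogenize_X_pow_sub_X (q : ℕ) :
    (Polynomial.X ^ q - Polynomial.X : Polynomial R).homogenize (q + 1) = dicksonForm R q := by
  rw [Polynomial.homogenize_sub, Polynomial.homogenize_X_pow q.le_succ,
    Polynomial.homogenize_X q.succ_ne_zero, dicksonForm, Nat.succ_sub_one, Nat.succ_sub le_rfl,
    Nat.sub_self, pow_one]

lemma eval_homogenize_one_zero (f : Polynomial R) (r : ℕ) :
    eval ![1, 0] (f.homogenize r) = f.coeff r := by
  rw [Polynomial.homogenize, map_sum, Finset.sum_eq_single (r, 0)]
  · simp [eval_monomial, Finsupp.prod_fintype]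
  · rintro ⟨i, j⟩ hij hne
    have hj : j ≠ 0 := by
      rintro rfl
      simp_all
    simp [eval_monomial, Finsupp.prod_fintype, hj]
  · simp

/-- The coefficient `f.coeff r` is the value of the form at the point at infinity `(1, 0)`; its
vanishing leaves room for the factor `Y` of the Dickson form. -/
lemma dicksonForm_dvd_homogenize {q r : ℕ} (hq : 1 < q) {f : Polynomial R}
    (hdvd : (Polynomial.X ^ q - Polynomial.X : Polynomial R) ∣ f) (hr : f.natDegree ≤ r)
    (hcoeff : f.coeff r = 0) : dicksonForm R q ∣ f.homogenize r := by
  rcases eq_or_ne f 0 with rfl | hf0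
  · simp
  have : Nontrivial R := Polynomial.nontrivial_iff.mp (nontrivial_of_ne f 0 hf0)
  obtain ⟨g, rfl⟩ := hdvd
  have hmonic : (Polynomial.X ^ q - Polynomial.X : Polynomial R).Monic :=
    Polynomial.monic_X_pow_sub (Polynomial.degree_X.trans_lt (by exact_mod_cast hq))
  have hdeg : (Polynomial.X ^ q - Polynomial.X : Polynomial R).natDegree = q := by
    rw [Polynomial.natDegree_sub_eq_left_of_natDegree_lt] <;> simp [hq]
  have hlt : q + g.natDegree < r := by
    rw [← hdeg, ← hmonic.natDegree_mul' (right_ne_zero_of_mul hf0)]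
    refine hr.lt_of_ne ?_
    rintro rfl
    exact hf0 (Polynomial.leadingCoeff_eq_zero.mp hcoeff)
  obtain ⟨m, rfl⟩ : ∃ m, r = q + 1 + m := Nat.exists_eq_add_of_le (by omega)
  rw [Polynomial.homogenize_mul _ _ (by omega) (by omega), homogenize_X_pow_sub_X]
  exact dvd_mul_right _ _

end DicksonForm

section FiniteField

variable {K : Type*} [Field K] [Fintype K] {q : ℕ}

section PowerSums

lemma pow_add_card_sub_one (hq : Fintype.card K = q) (x : K) {n : ℕ} (hn : n ≠ 0) :
    x ^ (n + (q - 1)) = x ^ n := by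
  subst hq
  obtain ⟨n, rfl⟩ := Nat.exists_eq_succ_of_ne_zero hn
  have hcard : n + 1 + (Fintype.card K - 1) = n + Fintype.card K := by
    have := Fintype.card_pos (α := K)
    omega
  rw [hcard, pow_add, FiniteField.pow_card, pow_succ]

lemma sum_pow_card_sub_one (hq : Fintype.card K = q) : ∑ x : K, x ^ (q - 1) = -1 := by
  classical
  subst hq
  have hpow (x : K) : x ^ (Fintype.card K - 1) = 1 - if x = 0 then 1 else 0 := by
    split_ifs with hx
    · rw [hx, zero_pow (Nat.sub_ne_zero_of_lt Fintype.one_lt_card), sub_self]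
    · rw [FiniteField.pow_card_sub_one_eq_one x hx, sub_zero]
  simp [hpow, Finset.sum_sub_distrib]

end PowerSums

section VanishingForms

lemma X_pow_card_sub_X_dvd (hq : Fintype.card K = q) {f : Polynomial K}
    (hf : ∀ x, f.eval x = 0) : (Polynomial.X ^ q - Polynomial.X : Polynomial K) ∣ f := by
  subst hq
  rcases eq_or_ne f 0 with rfl | hf0
  · exact dvd_zero _
  have hroots := FiniteField.roots_X_pow_card_sub_X K
  have hsplits : (Polynomial.X ^ Fintype.card K - Polynomial.X : Polynomial K).Splits := by
    rw [Polynomial.splits_iff_card_roots, hroots,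
      FiniteField.X_pow_card_sub_X_natDegree_eq K Fintype.one_lt_card]
    rfl
  refine hsplits.dvd_of_roots_le_roots
    (FiniteField.X_pow_card_sub_X_ne_zero K Fintype.one_lt_card) ?_
  rw [hroots, Multiset.le_iff_subset Finset.univ.nodup]
  exact fun x _ => (Polynomial.mem_roots hf0).mpr (hf x)

lemma eval_dicksonForm (hq : Fintype.card K = q) (v : Fin 2 → K) :
    eval v (dicksonForm K q) = 0 := by
  subst hq
  simp [dicksonForm, FiniteField.pow_card]

theorem dicksonForm_dvd_iff (hq : Fintype.card K = q) {r : ℕ} {P : MvPolynomial (Fin 2) K}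
    (hP : P.IsHomogeneous r) : dicksonForm K q ∣ P ↔ ∀ v, eval v P = 0 := by
  refine ⟨?_, fun hvanish => ?_⟩
  · rintro ⟨Q, rfl⟩ v
    rw [map_mul, eval_dicksonForm hq, zero_mul]
  obtain ⟨f, hf⟩ : ∃ f : Polynomial K, aeval ![Polynomial.X, 1] P = f := ⟨_, rfl⟩
  have hPf : f.homogenize r = P := Polynomial.homogenize_eq_of_isHomogeneous hP hf
  have hdeg : f.natDegree ≤ r := by
    rw [← hf, ← mul_one r]
    refine aeval_natDegree_le P hP.totalDegree_le _ (Fin.forall_fin_two.mpr ⟨?_, ?_⟩)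
    · exact Polynomial.natDegree_X_le
    · exact Polynomial.natDegree_one.trans_le zero_le_one
  have hroot (x : K) : f.eval x = 0 := by
    have heval := Polynomial.eval_homogenize hdeg ![x, 1] (by simp)
    simpa [hPf, hvanish, eq_comm] using heval
  have hcoeff : f.coeff r = 0 := by
    rw [← eval_homogenize_one_zero, hPf, hvanish]
  have hcard : 1 < q := hq ▸ Fintype.one_lt_card
  exact hPf ▸ dicksonForm_dvd_homogenize hcard (X_pow_card_sub_X_dvd hq hroot) hdeg hcoeff

end VanishingForms

section DicksonQuotient

variable (K) in
/-- The subspace `V_r*` of `V_r`: the forms of degree `r` divisible by the Dickson form. -/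
noncomputable def dicksonMultiples (q r : ℕ) : Submodule K (homogeneousSubmodule (Fin 2) K r) :=
  (homogeneousSubmodule (Fin 2) K r ⊓
    (Ideal.span {dicksonForm K q}).restrictScalars K).submoduleOf (homogeneousSubmodule (Fin 2) K r)

variable (K) in
/-- The quotient `V_r / V_r*`. -/
abbrev DicksonQuotient (q r : ℕ) : Type _ :=
  homogeneousSubmodule (Fin 2) K r ⧸ dicksonMultiples K q r

lemma ker_homogeneousEval (hq : Fintype.card K = q) (r : ℕ) :
    LinearMap.ker (homogeneousEval (Fin 2) K r) = dicksonMultiples K q r := by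
  ext P
  have hmem : P ∈ dicksonMultiples K q r ↔ dicksonForm K q ∣ P.1 := by
    simp [dicksonMultiples, Submodule.submoduleOf, Ideal.mem_span_singleton]
  rw [hmem, dicksonForm_dvd_iff hq P.2]
  exact funext_iff

/-- The action of a matrix on `V_r / V_r*`. -/
noncomputable def dicksonQuotientAct (hq : Fintype.card K = q) (r : ℕ)
    (M : Matrix (Fin 2) (Fin 2) K) : DicksonQuotient K q r →ₗ[K] DicksonQuotient K q r :=
  (dicksonMultiples K q r).mapQ _ (homogeneousAct r M) fun P hP => by
    rw [← ker_homogeneousEval hq, LinearMap.mem_ker] at hP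
    rw [Submodule.mem_comap, ← ker_homogeneousEval hq, LinearMap.mem_ker,
      homogeneousEval_homogeneousAct, hP]
    rfl

/-- The embedding of `V_r / V_r*` into the functions on `𝔽_q²`, by which the quotient is
studied. -/
noncomputable def dicksonQuotientEval (hq : Fintype.card K = q) (r : ℕ) :
    DicksonQuotient K q r →ₗ[K] (Fin 2 → K) → K :=
  (dicksonMultiples K q r).liftQ (homogeneousEval (Fin 2) K r) (ker_homogeneousEval hq r).ge

lemma dicksonQuotientEval_mk (hq : Fintype.card K = q) {r : ℕ}
    (P : homogeneousSubmodule (Fin 2) K r) :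
    dicksonQuotientEval hq r (Submodule.Quotient.mk P) = homogeneousEval (Fin 2) K r P :=
  rfl

lemma dicksonQuotientEval_injective (hq : Fintype.card K = q) (r : ℕ) :
    Function.Injective (dicksonQuotientEval hq r) := by
  rw [← LinearMap.ker_eq_bot]
  exact Submodule.ker_liftQ_eq_bot' _ _ (ker_homogeneousEval hq r).symm

lemma range_dicksonQuotientEval (hq : Fintype.card K = q) (r : ℕ) :
    LinearMap.range (dicksonQuotientEval hq r) =
      LinearMap.range (homogeneousEval (Fin 2) K r) :=
  Submodule.range_liftQ _ _ _

lemma dicksonQuotientEval_dicksonQuotientAct (hq : Fintype.card K = q) {r : ℕ}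
    (M : Matrix (Fin 2) (Fin 2) K) (x : DicksonQuotient K q r) :
    dicksonQuotientEval hq r (dicksonQuotientAct hq r M x) =
      fun v => dicksonQuotientEval hq r x (Matrix.vecMul v M) := by
  obtain ⟨P, rfl⟩ := Submodule.Quotient.mk_surjective _ x
  exact homogeneousEval_homogeneousAct M P

lemma homogeneousEval_injective (hq : Fintype.card K = q) {r : ℕ} (hr : r ≤ q) :
    Function.Injective (homogeneousEval (Fin 2) K r) := by
  subst hq
  intro P Q hPQ
  refine Subtype.ext (P.2.funext_of_le_card Q.2 (congrFun hPQ) ?_)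
  rw [Cardinal.mk_fintype]
  exact_mod_cast hr

end DicksonQuotient

section DegreeShift

lemma monomialFun_add_card_sub_one_left (hq : Fintype.card K = q) {i : ℕ} (hi : i ≠ 0) (j : ℕ) :
    monomialFun K (i + (q - 1)) j = monomialFun K i j :=
  funext fun v => by rw [monomialFun, monomialFun, pow_add_card_sub_one hq _ hi]

lemma monomialFun_add_card_sub_one_right (hq : Fintype.card K = q) (i : ℕ) {j : ℕ} (hj : j ≠ 0) :
    monomialFun K i (j + (q - 1)) = monomialFun K i j :=
  funext fun v => by rw [monomialFun, monomialFun, pow_add_card_sub_one hq _ hj]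

lemma range_homogeneousEval_le (hq : Fintype.card K = q) {r s : ℕ} (hr : r ≠ 0)
    (hs : r + (q - 1) = s) :
    LinearMap.range (homogeneousEval (Fin 2) K r) ≤
      LinearMap.range (homogeneousEval (Fin 2) K s) := by
  rw [range_homogeneousEval K r, Submodule.span_le]
  rintro _ ⟨⟨i, j⟩, hij : i + j = r, rfl⟩
  change monomialFun K i j ∈ _
  rcases eq_or_ne i 0 with rfl | hi
  · rw [← monomialFun_add_card_sub_one_right hq 0 (by omega)]
    exact monomialFun_mem_range (by omega)
  · rw [← monomialFun_add_card_sub_one_left hq hi]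
    exact monomialFun_mem_range (by omega)

lemma range_homogeneousEval_le_sup (hq : Fintype.card K = q) :
    LinearMap.range (homogeneousEval (Fin 2) K (2 * q - 2)) ≤
      LinearMap.range (homogeneousEval (Fin 2) K (q - 1)) ⊔ K ∙ monomialFun K (q - 1) (q - 1) := by
  rw [range_homogeneousEval K (2 * q - 2), Submodule.span_le]
  rintro _ ⟨⟨i, j⟩, hij : i + j = 2 * q - 2, rfl⟩
  change monomialFun K i j ∈ _
  rcases lt_trichotomy i (q - 1) with hi | rfl | hi
  · obtain ⟨k, rfl⟩ : ∃ k, j = k + (q - 1) := Nat.exists_eq_add_of_le' (by omega)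
    rw [monomialFun_add_card_sub_one_right hq i (by omega)]
    exact Submodule.mem_sup_left (monomialFun_mem_range (by omega))
  · obtain rfl : j = q - 1 := by omega
    exact Submodule.mem_sup_right (Submodule.mem_span_singleton_self _)
  · obtain ⟨k, rfl⟩ : ∃ k, i = k + (q - 1) := Nat.exists_eq_add_of_le' (by omega)
    rw [monomialFun_add_card_sub_one_left hq (by omega)]
    exact Submodule.mem_sup_left (monomialFun_mem_range (by omega))

lemma exists_lift_homogeneousEval (hq : Fintype.card K = q) {r s : ℕ} (hr : r ≠ 0)
    (hs : r + (q - 1) = s) :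
    ∃ ι : homogeneousSubmodule (Fin 2) K r →ₗ[K] DicksonQuotient K q s,
      dicksonQuotientEval hq s ∘ₗ ι = homogeneousEval (Fin 2) K r := by
  have hmem (P) : homogeneousEval (Fin 2) K r P ∈ LinearMap.range (dicksonQuotientEval hq s) := by
    rw [range_dicksonQuotientEval]
    exact range_homogeneousEval_le hq hr hs (LinearMap.mem_range_self _ P)
  let e := LinearEquiv.ofInjective _ (dicksonQuotientEval_injective hq s)
  refine ⟨e.symm ∘ₗ (homogeneousEval (Fin 2) K r).codRestrict _ hmem, LinearMap.ext fun P => ?_⟩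
  exact congrArg Subtype.val (e.apply_symm_apply ⟨_, hmem P⟩)

end DegreeShift

section ValueSum

variable (σ : Type*) [Fintype σ] [DecidableEq σ]

variable (K) in
/-- The linear form summing the values of a function over all points; on `V_{2q-2}` it is the
projection onto the trivial representation. -/
def valueSum : ((σ → K) → K) →ₗ[K] K :=
  ∑ v, LinearMap.proj v

variable {σ}

lemma valueSum_apply (f : (σ → K) → K) : valueSum K σ f = ∑ v, f v := by
  simp [valueSum]

lemma valueSum_comp_vecMul (g : GL σ K) (f : (σ → K) → K) :
    valueSum K σ (fun v => f (Matrix.vecMul v (g : Matrix σ σ K))) = valueSum K σ f := by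
  rw [valueSum_apply, valueSum_apply]
  have hinj := Matrix.vecMul_injective_of_isUnit g.isUnit
  exact (Finite.injective_iff_bijective.mp hinj).sum_comp f

lemma valueSum_homogeneousEval (hq : Fintype.card K = q) {r : ℕ}
    (hr : r < (q - 1) * Fintype.card σ) (P : homogeneousSubmodule σ K r) :
    valueSum K σ (homogeneousEval σ K r P) = 0 := by
  subst hq
  rw [valueSum_apply]
  exact sum_eval_eq_zero P.1 (P.2.totalDegree_le.trans_lt hr)

lemma valueSum_monomialFun_card_sub_one (hq : Fintype.card K = q) :
    valueSum K (Fin 2) (monomialFun K (q - 1) (q - 1)) = 1 := by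
  have hprod : ∀ x : K × K, monomialFun K (q - 1) (q - 1) ((finTwoArrowEquiv K).symm x) =
      x.1 ^ (q - 1) * x.2 ^ (q - 1) := fun _ => rfl
  rw [valueSum_apply, ← (finTwoArrowEquiv K).symm.sum_comp]
  simp only [hprod, Fintype.sum_prod_type]
  rw [← Fintype.sum_mul_sum, sum_pow_card_sub_one hq, neg_mul_neg, one_mul]

lemma range_homogeneousEval_inf_ker_valueSum (hq : Fintype.card K = q) :
    LinearMap.range (homogeneousEval (Fin 2) K (2 * q - 2)) ⊓ LinearMap.ker (valueSum K (Fin 2)) =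
      LinearMap.range (homogeneousEval (Fin 2) K (q - 1)) := by
  have hcard : 1 < q := hq ▸ Fintype.one_lt_card
  have hsum (P) : valueSum K (Fin 2) (homogeneousEval (Fin 2) K (q - 1) P) = 0 :=
    valueSum_homogeneousEval hq (by rw [Fintype.card_fin]; omega) P
  apply le_antisymm
  · rintro f ⟨hf, hf0⟩
    obtain ⟨_, ⟨P, rfl⟩, _, hc, rfl⟩ := Submodule.mem_sup.mp (range_homogeneousEval_le_sup hq hf)
    obtain ⟨c, rfl⟩ := Submodule.mem_span_singleton.mp hc
    have hc0 : c = 0 := by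
      simpa [hsum, valueSum_monomialFun_card_sub_one hq] using hf0
    rw [hc0, zero_smul, add_zero]
    exact LinearMap.mem_range_self _ P
  · refine le_inf (range_homogeneousEval_le hq (by omega) (by omega)) ?_
    rintro _ ⟨P, rfl⟩
    exact hsum P

lemma ker_valueSum_comp_dicksonQuotientEval (hq : Fintype.card K = q) :
    LinearMap.ker (valueSum K (Fin 2) ∘ₗ dicksonQuotientEval hq (2 * q - 2)) =
      (LinearMap.range (homogeneousEval (Fin 2) K (q - 1))).comap
        (dicksonQuotientEval hq (2 * q - 2)) := by
  rw [LinearMap.ker_comp, ← range_homogeneousEval_inf_ker_valueSum hq,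
    ← range_dicksonQuotientEval hq, Submodule.comap_inf, LinearMap.range_eq_map,
    Submodule.comap_map_eq_of_injective (dicksonQuotientEval_injective hq _), top_inf_eq]

lemma valueSum_comp_dicksonQuotientEval_surjective (hq : Fintype.card K = q) :
    Function.Surjective (valueSum K (Fin 2) ∘ₗ dicksonQuotientEval hq (2 * q - 2)) := by
  have hmem : monomialFun K (q - 1) (q - 1) ∈
      LinearMap.range (dicksonQuotientEval hq (2 * q - 2)) := by
    rw [range_dicksonQuotientEval]
    exact monomialFun_mem_range (by omega)
  obtain ⟨x, hx⟩ := hmem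
  refine LinearMap.surjective fun hzero => one_ne_zero (α := K) ?_
  rw [← valueSum_monomialFun_card_sub_one hq, ← hx, ← LinearMap.comp_apply, hzero,
    LinearMap.zero_apply]

end ValueSum

end FiniteField

theorem stmt2_general {K : Type*} [Field K] [Fintype K] {q : ℕ} (hq : Fintype.card K = q) :
    ∃ (ι : homogeneousSubmodule (Fin 2) K (q - 1) →ₗ[K] DicksonQuotient K q (2 * q - 2))
      (π : DicksonQuotient K q (2 * q - 2) →ₗ[K] K),
      Function.Injective ι ∧
      (∀ (g : GL (Fin 2) K) (P : homogeneousSubmodule (Fin 2) K (q - 1)),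
        ι (homogeneousAct (q - 1) (g : Matrix (Fin 2) (Fin 2) K) P) =
          dicksonQuotientAct hq _ (g : Matrix (Fin 2) (Fin 2) K) (ι P)) ∧
      ι ⟨X 0 ^ (q - 1), isHomogeneous_X_pow 0 (q - 1)⟩ =
        Submodule.Quotient.mk ⟨X 0 ^ (2 * q - 2), isHomogeneous_X_pow 0 (2 * q - 2)⟩ ∧
      Function.Surjective π ∧
      LinearMap.ker π = LinearMap.range ι ∧
      (∀ (g : GL (Fin 2) K) (x : DicksonQuotient K q (2 * q - 2)),
        π (dicksonQuotientAct hq _ (g : Matrix (Fin 2) (Fin 2) K) x) = π x) := by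
  have hcard : 1 < q := hq ▸ Fintype.one_lt_card
  have hsplit : 2 * q - 2 = (q - 1) + (q - 1) := by omega
  have hE := dicksonQuotientEval_injective hq (2 * q - 2)
  obtain ⟨ι, hι⟩ := exists_lift_homogeneousEval hq (Nat.sub_ne_zero_of_lt hcard) hsplit.symm
  have hιP (P) : dicksonQuotientEval hq _ (ι P) = homogeneousEval (Fin 2) K (q - 1) P :=
    LinearMap.congr_fun hι P
  refine ⟨ι, valueSum K (Fin 2) ∘ₗ dicksonQuotientEval hq _, ?_, fun g P => ?_, ?_,
    valueSum_comp_dicksonQuotientEval_surjective hq, ?_, fun g x => ?_⟩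
  · refine Function.Injective.of_comp (f := dicksonQuotientEval hq (2 * q - 2)) ?_
    rw [← LinearMap.coe_comp, hι]
    exact homogeneousEval_injective hq (q.sub_le 1)
  · apply hE
    rw [dicksonQuotientEval_dicksonQuotientAct, hιP, hιP, homogeneousEval_homogeneousAct]
  · apply hE
    rw [hιP, dicksonQuotientEval_mk, homogeneousEval_X_pow, homogeneousEval_X_pow, hsplit,
      monomialFun_add_card_sub_one_left hq (by omega)]
  · rw [ker_valueSum_comp_dicksonQuotientEval, ← hι, LinearMap.range_comp,
      Submodule.comap_map_eq_of_injective hE]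
  · simp only [LinearMap.comp_apply, dicksonQuotientEval_dicksonQuotientAct]
    exact valueSum_comp_vecMul g (dicksonQuotientEval hq _ x)

/-- There is a short exact sequence of GL₂(𝔽_p)-representations
`0 → V_{p−1} → V_{2p−2}/V*_{2p−2} → V_0 → 0`, where the first map is the injective
equivariant map ι with ι(X^{p−1}) = class of X^{2p−2}, and the quotient by its image is
the trivial representation V₀ (realized as 𝔽_p with trivial GL₂(𝔽_p)-action). -/
theorem stmt2 (p : ℕ) [Fact p.Prime] :
    ∃ (ι : Vpoly p (p - 1) →ₗ[ZMod p] Qspace p) (π : Qspace p →ₗ[ZMod p] ZMod p),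
      -- ι is injective
      Function.Injective ι ∧
      -- ι is GL₂(𝔽_p)-equivariant
      (∀ (g : GL (Fin 2) (ZMod p)) (P : Vpoly p (p - 1)),
        ι (actV p (p - 1) (g : Matrix (Fin 2) (Fin 2) (ZMod p)) P) =
          qAct p (g : Matrix (Fin 2) (Fin 2) (ZMod p)) (ι P)) ∧
      -- ι(X^{p−1}) = class of X^{2p−2}
      ι ⟨(X 0 : MvPolynomial (Fin 2) (ZMod p)) ^ (p - 1), memX0 p (p - 1)⟩ = xElt p ∧
      -- π is surjective with kernel exactly the image of ι (exactness)
      Function.Surjective π ∧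
      LinearMap.ker π = LinearMap.range ι ∧
      -- π is equivariant onto the trivial representation V₀
      (∀ (g : GL (Fin 2) (ZMod p)) (x : Qspace p),
        π (qAct p (g : Matrix (Fin 2) (Fin 2) (ZMod p)) x) = π x) :=
  stmt2_general (ZMod.card p)
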